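/- arXiv:2008.08724 — 11 statements merged into one kernel-verified Lean document; each statement's English description precedes it below -/
import Mathlib

section
/- The breaking set meets the real axis exactly in the two rays through ±2: for every real s with 0 < s < 2 one has H(s) = 2·Real.arccosh(2/s) − Real.sqrt(4 − s²) (a positive real number), so Re H(s) > 0; for every real s with −2 < s < 0 one has Re H(s) < 0; and for every real s with |s| ≥ 2 one has Re H(s) = 0. Consequently {s ∈ ℝ : s ≠ 0 ∧ Re H(s) = 0} = (−∞, −2] ∪ [2, ∞). -/
/-!
Write `x = 2/s`. For `0 < |s| < 2` the principal root is the positive real number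
`r = √(x² - 1)`, so `Re H(s) = 2 log |x + r| - s r`. For `s > 0`, the sign follows from
`log (x + r) > r / x` (this is `t > tanh t` at `t = arccosh x`), which is the Padé bound
`log (1 + u) > 2 u / (u + 2)` at `1 + u = (x + r)²`; see `div_lt_log_add`. On the real interval
`(-2, 2)` the function `Re H` is odd because `(x + r) (x - r) = 1`; see `re_Hfun_neg`.

For `|s| ≥ 2` the root `w` satisfies `w² = x² - 1 ≤ 0`, so `w` is purely imaginary. Hence
`s w` has no real part and `|x + w|² = x² + (1 - x²) = 1`, so the logarithm has none either.
-/

open Complex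

/-- The saddle-point value `H(s) = h(2/s; s)` of the genus-zero modified external field. -/
noncomputable def Hfun (s : ℂ) : ℂ :=
  2 * Complex.log (2 / s + (4 / s ^ 2 - 1) ^ ((1 : ℂ) / 2))
    - s * (4 / s ^ 2 - 1) ^ ((1 : ℂ) / 2)

/-- The inverse hyperbolic cosine, `arccosh x = log (x + √(x² − 1))` for `x ≥ 1`. -/
noncomputable def Real.arccosh (x : ℝ) : ℝ := Real.log (x + Real.sqrt (x ^ 2 - 1))

lemma re_two_mul (z : ℂ) : (2 * z).re = 2 * z.re := by simp

/-- The inequality `tanh t < t` at `t = arccosh x`, with `r = sinh t`. -/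
lemma div_lt_log_add {x r : ℝ} (hx : 0 < x) (hr : 0 < r) (h : r ^ 2 = x ^ 2 - 1) :
    r / x < Real.log (x + r) := by
  have hu : 0 < (x + r) ^ 2 - 1 := by nlinarith [mul_pos hx hr, sq_nonneg r]
  have key := Real.lt_log_one_add_of_pos hu
  rw [add_sub_cancel, Real.log_pow] at key
  have e : 2 * ((x + r) ^ 2 - 1) / ((x + r) ^ 2 - 1 + 2) = 2 * (r / x) := by
    -- Both `(x + r)² ∓ 1` are multiples of `x + r`, because `r² = x² - 1`.
    have h1 : (x + r) ^ 2 - 1 = 2 * r * (x + r) := by linear_combination -h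
    have h2 : (x + r) ^ 2 - 1 + 2 = 2 * x * (x + r) := by linear_combination h
    rw [h2, h1]
    field_simp
  rw [e] at key
  push_cast at key
  linarith

lemma four_div_sq_sub_one_pos {s : ℝ} (h0 : s ≠ 0) (h : |s| < 2) : 0 < 4 / s ^ 2 - 1 := by
  have h1 : s ^ 2 < 4 := by nlinarith [abs_lt.mp h]
  have h2 : 0 < s ^ 2 := by positivity
  rw [sub_pos, lt_div_iff₀ h2]
  linarith

lemma Hfun_ofReal {s : ℝ} (h0 : s ≠ 0) (h : |s| < 2) :
    Hfun s = 2 * Complex.log ((2 / s + Real.sqrt (4 / s ^ 2 - 1) : ℝ) : ℂ)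
      - ((s * Real.sqrt (4 / s ^ 2 - 1) : ℝ) : ℂ) := by
  have hr : (4 / (s : ℂ) ^ 2 - 1) ^ ((1 : ℂ) / 2) = (Real.sqrt (4 / s ^ 2 - 1) : ℂ) := by
    rw [Real.sqrt_eq_rpow, Complex.ofReal_cpow (four_div_sq_sub_one_pos h0 h).le]
    push_cast
    rfl
  rw [Hfun, hr]
  push_cast
  rfl

lemma re_Hfun_ofReal {s : ℝ} (h0 : s ≠ 0) (h : |s| < 2) :
    (Hfun s).re = 2 * Real.log (2 / s + Real.sqrt (4 / s ^ 2 - 1))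
      - s * Real.sqrt (4 / s ^ 2 - 1) := by
  rw [Hfun_ofReal h0 h, Complex.sub_re, Complex.ofReal_re, re_two_mul, Complex.log_re,
    Complex.norm_real, Real.norm_eq_abs, Real.log_abs]

lemma re_Hfun_pos {s : ℝ} (h0 : 0 < s) (h : s < 2) : 0 < (Hfun s).re := by
  have h' : |s| < 2 := by rwa [abs_of_pos h0]
  have hp := four_div_sq_sub_one_pos h0.ne' h'
  rw [re_Hfun_ofReal h0.ne' h']
  have := div_lt_log_add (x := 2 / s) (by positivity) (Real.sqrt_pos.mpr hp)
    (by rw [Real.sq_sqrt hp.le]; ring)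
  have e : Real.sqrt (4 / s ^ 2 - 1) / (2 / s) = s * Real.sqrt (4 / s ^ 2 - 1) / 2 := by
    field_simp
  linarith

/-- `Re H` is odd on the real interval `(-2, 2)`: the two logarithms cancel because
`(2/s + r) (2/s - r) = 1`. -/
lemma re_Hfun_neg {s : ℝ} (h0 : s ≠ 0) (h : |s| < 2) :
    (Hfun ((-s : ℝ) : ℂ)).re = -(Hfun s).re := by
  have hp := four_div_sq_sub_one_pos h0 h
  rw [re_Hfun_ofReal h0 h, re_Hfun_ofReal (neg_ne_zero.mpr h0) (by rwa [abs_neg]), neg_sq]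
  set r := Real.sqrt (4 / s ^ 2 - 1) with hr
  have hr2 : r ^ 2 = 4 / s ^ 2 - 1 := Real.sq_sqrt hp.le
  have hprod : (2 / s + r) * (2 / s - r) = 1 := by
    have : (2 / s) ^ 2 = 4 / s ^ 2 := by ring
    linear_combination this - hr2
  have hlog : Real.log (2 / -s + r) = -Real.log (2 / s + r) := by
    rw [← Real.log_inv, ← eq_inv_of_mul_eq_one_right hprod, ← Real.log_neg_eq_log (2 / s - r)]
    congr 1
    ring
  rw [hlog]
  ring

lemma re_Hfun_eq_zero {s : ℝ} (h : 2 ≤ |s|) : (Hfun s).re = 0 := by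
  have hs2 : 4 ≤ s ^ 2 := by rw [← sq_abs]; nlinarith
  have hq : 4 / s ^ 2 - 1 ≤ 0 := by
    rw [sub_nonpos, div_le_one (by linarith)]
    exact hs2
  set w : ℂ := (4 / (s : ℂ) ^ 2 - 1) ^ ((1 : ℂ) / 2) with hw
  have hw2 : w ^ 2 = ((4 / s ^ 2 - 1 : ℝ) : ℂ) := by
    have := Complex.cpow_nat_inv_pow (4 / (s : ℂ) ^ 2 - 1) (n := 2) two_ne_zero
    rw [hw, one_div]
    push_cast at this ⊢
    exact this
  have hre := congrArg Complex.re hw2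
  have him := congrArg Complex.im hw2
  rw [sq, Complex.mul_re, Complex.ofReal_re] at hre
  rw [sq, Complex.mul_im, Complex.ofReal_im] at him
  have hw0 : w.re = 0 := by
    have hprod : w.re * w.im = 0 := by linarith
    rcases mul_eq_zero.mp hprod with h1 | h1
    · exact h1
    · rw [h1] at hre
      nlinarith
  have hnorm : ‖2 / (s : ℂ) + w‖ = 1 := by
    have hcast : (2 / (s : ℂ)) = ((2 / s : ℝ) : ℂ) := by push_cast; rfl
    rw [← sq_eq_sq₀ (norm_nonneg _) zero_le_one, ← Complex.normSq_eq_norm_sq,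
      Complex.normSq_apply, hcast, Complex.add_re, Complex.add_im, Complex.ofReal_re,
      Complex.ofReal_im, hw0]
    rw [hw0] at hre
    have : (2 / s) ^ 2 = 4 / s ^ 2 := by ring
    linear_combination this - hre
  rw [Hfun, ← hw, Complex.sub_re, re_two_mul, Complex.log_re, hnorm,
    Complex.re_ofReal_mul, hw0]
  simp

theorem breaking_set_on_real_axis :
    (∀ s : ℝ, 0 < s → s < 2 →
      Hfun (s : ℂ) = ((2 * Real.arccosh (2 / s) - Real.sqrt (4 - s ^ 2) : ℝ) : ℂ) ∧
      0 < (Hfun (s : ℂ)).re) ∧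
    (∀ s : ℝ, -2 < s → s < 0 → (Hfun (s : ℂ)).re < 0) ∧
    (∀ s : ℝ, 2 ≤ |s| → (Hfun (s : ℂ)).re = 0) ∧
    {s : ℝ | s ≠ 0 ∧ (Hfun (s : ℂ)).re = 0} = Set.Iic (-2 : ℝ) ∪ Set.Ici (2 : ℝ) := by
  have hneg : ∀ s : ℝ, -2 < s → s < 0 → (Hfun (s : ℂ)).re < 0 := by
    intro s h1 h2
    have := re_Hfun_neg h2.ne (abs_lt.mpr ⟨h1, by linarith⟩)
    have := re_Hfun_pos (s := -s) (by linarith) (by linarith)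
    linarith
  refine ⟨fun s h0 h => ⟨?_, re_Hfun_pos h0 h⟩, hneg, fun s => re_Hfun_eq_zero, ?_⟩
  · rw [Hfun_ofReal h0.ne' (by rwa [abs_of_pos h0]), ← Complex.ofReal_log (by positivity),
      Real.arccosh]
    have e1 : (2 / s) ^ 2 - 1 = 4 / s ^ 2 - 1 := by ring
    have e2 : Real.sqrt (4 - s ^ 2) = s * Real.sqrt (4 / s ^ 2 - 1) := by
      rw [show 4 - s ^ 2 = s ^ 2 * (4 / s ^ 2 - 1) by field_simp,
        Real.sqrt_mul (sq_nonneg s), Real.sqrt_sq h0.le]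
    rw [e1, e2]
    push_cast
    rfl
  · ext s
    simp only [Set.mem_ofPred_eq, Set.mem_union, Set.mem_Iic, Set.mem_Ici]
    constructor
    · rintro ⟨h0, hz⟩
      by_contra! hc
      rcases lt_or_gt_of_ne h0 with h1 | h1
      · exact (hneg s hc.1 h1).ne hz
      · exact (re_Hfun_pos h1 hc.2).ne' hz
    · intro h
      refine ⟨?_, re_Hfun_eq_zero (le_abs'.mpr h)⟩
      rintro rfl
      norm_num at h
end

section
/- On the imaginary axis the real part of H is given by the critical-time function: for every t > 0, Re H(−i·t) = g(t) and Re H(i·t) = −g(t). In particular, a purely imaginary s = ±i·t with t > 0 is a breaking point if and only if g(t) = 0, i.e. the breaking curves 𝔟₊ and 𝔟₋ cross the imaginary axis exactly at ±i·t_c. -/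
/-!
For `s = ∓it` one has `4/s² - 1 = -(r/t)²` with `r = √(t² + 4)`, a negative real number, whose
principal square root is `i r/t`. Hence the argument of the logarithm is `i (r ± 2)/t`, so the real
part of the logarithm is the real logarithm of `(r ± 2)/t`, while `s · (i r/t) = ± r`. The value at
`it` is minus the value at `-it` because `(r - 2)(r + 2) = t²`.
-/

open Complex

/-- The set of breaking points. -/
def Breaking : Set ℂ := {s : ℂ | s ≠ 0 ∧ (Hfun s).re = 0}

/-- The function whose unique positive zero is the critical time `t_c`. -/
noncomputable def gfun (t : ℝ) : ℝ :=
  2 * Real.log ((2 + Real.sqrt (t ^ 2 + 4)) / t) - Real.sqrt (t ^ 2 + 4)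

/-- The principal square root of a negative real `-x²` is `i x`: the cut `(-∞, 0]` is approached
from above. -/
lemma cpow_half_neg_sq {x : ℝ} (hx : 0 < x) :
    (-((x : ℂ) ^ 2)) ^ ((1 : ℂ) / 2) = Complex.I * (x : ℂ) := by
  have h : -((x : ℂ) ^ 2) = (Complex.I * x) ^ 2 := by
    rw [mul_pow, Complex.I_sq]; ring
  have harg : Complex.arg (Complex.I * x) = Real.pi / 2 := by
    rw [mul_comm, Complex.arg_real_mul _ hx, Complex.arg_I]
  have hpi := Real.pi_pos
  rw [h, one_div]
  refine Complex.pow_cpow_ofNat_inv ?_ ?_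
  · rw [harg]; linarith
  · rw [harg]

lemma re_log_I_mul {x : ℝ} (hx : 0 < x) :
    (Complex.log (Complex.I * (x : ℂ))).re = Real.log x := by
  simp [Complex.log_re, abs_of_pos hx]

theorem H_on_imaginary_axis :
    ∀ t : ℝ, 0 < t →
      (Hfun (-Complex.I * (t : ℂ))).re = gfun t ∧
      (Hfun (Complex.I * (t : ℂ))).re = -gfun t ∧
      ((-Complex.I * (t : ℂ)) ∈ Breaking ↔ gfun t = 0) ∧
      ((Complex.I * (t : ℂ)) ∈ Breaking ↔ gfun t = 0) := by
  intro t ht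
  have htC : (t : ℂ) ≠ 0 := by exact_mod_cast ht.ne'
  have hre2 : ∀ z : ℂ, (2 * z).re = 2 * z.re := by simp
  have hI := Complex.I_ne_zero
  set r : ℝ := Real.sqrt (t ^ 2 + 4) with hr
  have hr2 : r ^ 2 = t ^ 2 + 4 := Real.sq_sqrt (by positivity)
  have hrpos : 0 < r := Real.sqrt_pos.mpr (by positivity)
  have hr_gt : 2 < r := by nlinarith
  have hr2C : (r : ℂ) ^ 2 = (t : ℂ) ^ 2 + 4 := by exact_mod_cast hr2
  have hroot : (-4 / (t : ℂ) ^ 2 - 1) ^ ((1 : ℂ) / 2) = Complex.I * ((r / t : ℝ) : ℂ) := by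
    rw [← cpow_half_neg_sq (div_pos hrpos ht)]
    congr 1
    push_cast
    rw [div_pow, hr2C]
    field_simp
    ring
  have hsq : (4 : ℂ) / (Complex.I * t) ^ 2 - 1 = -4 / (t : ℂ) ^ 2 - 1 := by
    rw [mul_pow, Complex.I_sq, neg_one_mul, div_neg, neg_div]
  have hsq' : (4 : ℂ) / (-Complex.I * t) ^ 2 - 1 = -4 / (t : ℂ) ^ 2 - 1 := by
    rw [neg_mul, neg_sq, hsq]
  have hminus : (Hfun (-Complex.I * (t : ℂ))).re = gfun t := by
    have harg : 2 / (-Complex.I * (t : ℂ)) + Complex.I * ((r / t : ℝ) : ℂ)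
        = Complex.I * (((2 + r) / t : ℝ) : ℂ) := by
      push_cast
      field_simp
      linear_combination (-2 : ℂ) * Complex.I_sq
    have hprod : -Complex.I * (t : ℂ) * (Complex.I * ((r / t : ℝ) : ℂ)) = (r : ℂ) := by
      push_cast
      field_simp
      linear_combination (-(r : ℂ)) * Complex.I_sq
    have hre := re_log_I_mul (x := (2 + r) / t) (by positivity)
    rw [Hfun, gfun, hsq', hroot, harg, hprod, Complex.sub_re, Complex.ofReal_re,
      hre2, hre]
  have hplus : (Hfun (Complex.I * (t : ℂ))).re = -gfun t := by
    have harg : 2 / (Complex.I * (t : ℂ)) + Complex.I * ((r / t : ℝ) : ℂ)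
        = Complex.I * (((r - 2) / t : ℝ) : ℂ) := by
      push_cast
      field_simp
      linear_combination (2 : ℂ) * Complex.I_sq
    have hprod : Complex.I * (t : ℂ) * (Complex.I * ((r / t : ℝ) : ℂ)) = -(r : ℂ) := by
      push_cast
      field_simp
      linear_combination (r : ℂ) * Complex.I_sq
    have hre := re_log_I_mul (x := (r - 2) / t) (div_pos (by linarith) ht)
    have hinv : (r - 2) / t = ((2 + r) / t)⁻¹ := by
      field_simp
      linear_combination hr2
    rw [Hfun, gfun, hsq, hroot, harg, hprod, Complex.sub_re, Complex.neg_re, Complex.ofReal_re,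
      hre2, hre, hinv, Real.log_inv]
    ring
  refine ⟨hminus, hplus, ?_, ?_⟩
  · simp [Breaking, -neg_mul, hminus, htC]
  · simp [Breaking, hplus, htC]
end

section
/- The breaking set has the symmetries used in Theorem 2.1: for every s ∈ ℂ with s ≠ 0, Re H(−s) = −Re H(s); and for every s ∈ ℂ with Re s ≠ 0 and Im s ≠ 0, Re H(conj s) = Re H(s). In particular the set 𝔅 ∖ (ℝ ∪ iℝ) is invariant under complex conjugation and under s ↦ −s. -/
/-!
Write `r = (4/s² - 1)^(1/2)`, so that `Re H(s) = 2 log |2/s + r| - Re (s r)`.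

Under `s ↦ -s` the root `r` is unchanged, so `Re (s r)` changes sign; and since
`(2/s + r)(-2/s + r) = r² - 4/s² = -1`, the two moduli are reciprocal and the logarithm changes
sign as well.

Under conjugation, `4/s² - 1` is replaced by its conjugate. Off the two axes `s²` is not real, so
`4/s² - 1` avoids the branch cut, where the principal root commutes with conjugation; hence `r`
and `2/s + r` are conjugated, which preserves the modulus and the real part.
-/

open Complex

lemma Hfun_re (s : ℂ) :
    (Hfun s).re = 2 * Real.log ‖2 / s + (4 / s ^ 2 - 1) ^ ((1 : ℂ) / 2)‖
      - (s * (4 / s ^ 2 - 1) ^ ((1 : ℂ) / 2)).re := by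
  simp [Hfun, Complex.log_re]

lemma Hfun_neg_re (s : ℂ) : (Hfun (-s)).re = -(Hfun s).re := by
  rw [Hfun_re, Hfun_re, neg_sq]
  have hr : ((4 / s ^ 2 - 1) ^ ((1 : ℂ) / 2)) ^ 2 = 4 / s ^ 2 - 1 := by
    rw [one_div]
    exact Complex.cpow_ofNat_inv_pow (4 / s ^ 2 - 1) 2
  generalize (4 / s ^ 2 - 1) ^ ((1 : ℂ) / 2) = r at hr ⊢
  have hprod : (2 / -s + r) * (2 / s + r) = -1 := by
    rw [div_neg]
    linear_combination hr
  have hnorm : ‖2 / -s + r‖ * ‖2 / s + r‖ = 1 := by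
    rw [← norm_mul, hprod, norm_neg, norm_one]
  rw [eq_inv_of_mul_eq_one_left hnorm, Real.log_inv, neg_mul, Complex.neg_re]
  ring

/-- Off the coordinate axes `4/s² - 1` is not real, so it stays off the branch cut. -/
lemma arg_four_div_sq_sub_one_ne_pi {s : ℂ} (hre : s.re ≠ 0) (him : s.im ≠ 0) :
    (4 / s ^ 2 - 1).arg ≠ Real.pi := by
  intro h
  have h0 : (4 / s ^ 2 - 1).im = 0 := (Complex.arg_eq_pi_iff.mp h).2
  have hs : s ≠ 0 := fun h => hre (by simp [h])
  have hn : Complex.normSq (s ^ 2) ≠ 0 := by simpa using hs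
  have hre4 : (4 : ℂ).re = 4 := rfl
  have him4 : (4 : ℂ).im = 0 := rfl
  have him2 : (s ^ 2).im = 2 * (s.re * s.im) := by
    rw [sq, Complex.mul_im]
    ring
  rw [Complex.sub_im, Complex.div_im, hre4, him4, him2, Complex.one_im] at h0
  field_simp at h0
  have : s.re * s.im = 0 := by linarith
  exact mul_ne_zero hre him this

lemma Hfun_conj_re {s : ℂ} (hre : s.re ≠ 0) (him : s.im ≠ 0) :
    (Hfun ((starRingEnd ℂ) s)).re = (Hfun s).re := by
  have hw : 4 / (starRingEnd ℂ) s ^ 2 - 1 = (starRingEnd ℂ) (4 / s ^ 2 - 1) := by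
    simp [map_ofNat (starRingEnd ℂ) 4]
  have hr : (4 / (starRingEnd ℂ) s ^ 2 - 1) ^ ((1 : ℂ) / 2)
      = (starRingEnd ℂ) ((4 / s ^ 2 - 1) ^ ((1 : ℂ) / 2)) := by
    rw [hw, Complex.conj_cpow _ _ (arg_four_div_sq_sub_one_ne_pi hre him)]
    simp [map_ofNat (starRingEnd ℂ) 2]
  have h2 : 2 / (starRingEnd ℂ) s = (starRingEnd ℂ) (2 / s) := by
    simp [map_ofNat (starRingEnd ℂ) 2]
  rw [Hfun_re, Hfun_re, hr, h2, ← map_add, ← map_mul, Complex.norm_conj, Complex.conj_re]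

theorem breaking_set_symmetries :
    (∀ s : ℂ, s ≠ 0 → (Hfun (-s)).re = -(Hfun s).re) ∧
    (∀ s : ℂ, s.re ≠ 0 → s.im ≠ 0 → (Hfun ((starRingEnd ℂ) s)).re = (Hfun s).re) ∧
    (∀ s : ℂ, s.re ≠ 0 → s.im ≠ 0 →
      ((s ∈ Breaking ↔ (starRingEnd ℂ) s ∈ Breaking) ∧ (s ∈ Breaking ↔ -s ∈ Breaking))) := by
  refine ⟨fun s _ => Hfun_neg_re s, fun s hre him => Hfun_conj_re hre him,
    fun s hre him => ⟨?_, ?_⟩⟩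
  · simp [Breaking, Hfun_conj_re hre him]
  · simp [Breaking, Hfun_neg_re]
end

section
/- The breaking curve 𝔟₊ connects −2 and 2 while remaining in the upper half plane: the set {s ∈ ℂ : Im s > 0 ∧ Re H(s) = 0} ∪ {−2, 2} is compact and connected. -/
/-!
Write `2 / s = cosh w` with `w = x + i y`. Whatever the branches, `sinh w` is the square root occurring
in `H`, so `H(s) = 2 (w - tanh w)` and, for `s ≠ 0`, the equation `Re H(s) = 0` reads
`x (sinh² x + cos² y) = sinh x cosh x` (`exists_uniformizer`).

If `Im s > 0` then `x ≠ 0`, and with `a = |x|` the equation becomes `cos² y = G(a)`, where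
`G(a) = cosh a · (sinh a / a) - sinh² a`. One has `G < 1` for `a > 0`, `G(0) = 1`, and `0 ≤ G(a)`
exactly when `a sinh a ≤ cosh a`, i.e. for `a ∈ [0, a₀]` with `a₀ sinh a₀ = cosh a₀`. Consequently the
set in question is the union of the two explicit arcs
`a ↦ 2 / (± cosh a √G(a) - i sinh a √(1 - G(a)))`, `a ∈ [0, a₀]`, which start at `± 2` and
meet at `a = a₀`, where `G(a₀) = 0`. Both arcs are continuous images of a compact interval, whence
compactness and connectedness.
-/

open Complex

/-- Uniformization `2 / s = cosh (x + i y)`, written in real and imaginary parts, together with the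
breaking equation in the coordinates `(x, y)`. -/
lemma exists_uniformizer (s : ℂ) (hs : s ≠ 0) : ∃ x y : ℝ,
    (2 / s).re = Real.cosh x * Real.cos y ∧ (2 / s).im = Real.sinh x * Real.sin y ∧
    ((Hfun s).re = 0 ↔
      x * (Real.sinh x ^ 2 + Real.cos y ^ 2) = Real.sinh x * Real.cosh x) := by
  obtain ⟨R, hRdef⟩ : ∃ R : ℂ, R = (4 / s ^ 2 - 1) ^ ((1 : ℂ) / 2) := ⟨_, rfl⟩
  have hR : R ^ 2 = 4 / s ^ 2 - 1 := by
    rw [hRdef, one_div]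
    exact Complex.cpow_ofNat_inv_pow (4 / s ^ 2 - 1) 2
  have hmul : (2 / s + R) * (2 / s - R) = 1 := by
    have : (2 / s + R) * (2 / s - R) = 4 / s ^ 2 - R ^ 2 := by ring
    rw [this, hR]; ring
  have hu : 2 / s + R ≠ 0 := left_ne_zero_of_mul_eq_one hmul
  obtain ⟨w, hw⟩ : ∃ w : ℂ, w = Complex.log (2 / s + R) := ⟨_, rfl⟩
  have he : Complex.exp w = 2 / s + R := by rw [hw, Complex.exp_log hu]
  have hen : Complex.exp (-w) = 2 / s - R := by
    rw [Complex.exp_neg, he]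
    exact inv_eq_of_mul_eq_one_right hmul
  have hc : Complex.cosh w = 2 / s := by rw [Complex.cosh, he, hen]; ring
  have hsh : Complex.sinh w = R := by rw [Complex.sinh, he, hen]; ring
  have hwxy : w = (w.re : ℂ) + (w.im : ℂ) * I := (Complex.re_add_im w).symm
  have hcre : (Complex.cosh w).re = Real.cosh w.re * Real.cos w.im := by
    rw [hwxy, Complex.cosh_add, Complex.cosh_mul_I, Complex.sinh_mul_I]
    simp only [← Complex.ofReal_cosh, ← Complex.ofReal_sinh, ← Complex.ofReal_cos,
      ← Complex.ofReal_sin]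
    simp [-Complex.ofReal_cosh, -Complex.ofReal_sinh, -Complex.ofReal_cos, -Complex.ofReal_sin]
  have hcim : (Complex.cosh w).im = Real.sinh w.re * Real.sin w.im := by
    rw [hwxy, Complex.cosh_add, Complex.cosh_mul_I, Complex.sinh_mul_I]
    simp only [← Complex.ofReal_cosh, ← Complex.ofReal_sinh, ← Complex.ofReal_cos,
      ← Complex.ofReal_sin]
    simp [-Complex.ofReal_cosh, -Complex.ofReal_sinh, -Complex.ofReal_cos, -Complex.ofReal_sin]
  have hsre : (Complex.sinh w).re = Real.sinh w.re * Real.cos w.im := by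
    rw [hwxy, Complex.sinh_add, Complex.cosh_mul_I, Complex.sinh_mul_I]
    simp only [← Complex.ofReal_cosh, ← Complex.ofReal_sinh, ← Complex.ofReal_cos,
      ← Complex.ofReal_sin]
    simp [-Complex.ofReal_cosh, -Complex.ofReal_sinh, -Complex.ofReal_cos, -Complex.ofReal_sin]
  have hsim : (Complex.sinh w).im = Real.cosh w.re * Real.sin w.im := by
    rw [hwxy, Complex.sinh_add, Complex.cosh_mul_I, Complex.sinh_mul_I]
    simp only [← Complex.ofReal_cosh, ← Complex.ofReal_sinh, ← Complex.ofReal_cos,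
      ← Complex.ofReal_sin]
    simp [-Complex.ofReal_cosh, -Complex.ofReal_sinh, -Complex.ofReal_cos, -Complex.ofReal_sin]
  have hc0 : Complex.cosh w ≠ 0 := by rw [hc]; exact div_ne_zero two_ne_zero hs
  have hsw : s = 2 / Complex.cosh w := by rw [hc]; field_simp
  have hns : Complex.normSq (Complex.cosh w) = Real.sinh w.re ^ 2 + Real.cos w.im ^ 2 := by
    rw [Complex.normSq_apply, hcre, hcim]
    linear_combination Real.cos w.im ^ 2 * Real.cosh_sq w.re +
      Real.sinh w.re ^ 2 * Real.sin_sq_add_cos_sq w.im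
  have hpos : 0 < Complex.normSq (Complex.cosh w) := Complex.normSq_pos.2 hc0
  refine ⟨w.re, w.im, by rw [← hc, hcre], by rw [← hc, hcim], ?_⟩
  have hH : Hfun s = 2 * (w - Complex.sinh w / Complex.cosh w) := by
    rw [Hfun, ← hRdef, ← hw, ← hsh]
    nth_rewrite 1 [hsw]
    ring
  have hre : (Hfun s).re = 2 * (w.re - Real.sinh w.re * Real.cosh w.re /
      Complex.normSq (Complex.cosh w)) := by
    rw [hH]
    simp only [Complex.mul_re, Complex.re_ofNat, Complex.im_ofNat, zero_mul, sub_zero,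
      Complex.sub_re, Complex.div_re]
    rw [hcre, hcim, hsre, hsim, ← add_div]
    congr 3
    linear_combination Real.sinh w.re * Real.cosh w.re * Real.sin_sq_add_cos_sq w.im
  rw [hre, ← hns]
  constructor
  · intro h
    have h1 : w.re = Real.sinh w.re * Real.cosh w.re / Complex.normSq (Complex.cosh w) := by
      linarith
    exact (eq_div_iff hpos.ne').1 h1
  · intro h
    have h1 := (eq_div_iff hpos.ne').2 h
    linarith

/-- The continuous extension of `sinh a / a` to `a = 0`. -/
noncomputable def sinhc (a : ℝ) : ℝ := dslope Real.sinh 0 a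

lemma mul_sinhc (a : ℝ) : a * sinhc a = Real.sinh a := by
  simpa [sinhc] using sub_smul_dslope Real.sinh 0 a

lemma sinhc_zero : sinhc 0 = 1 := by
  simp [sinhc]

lemma continuous_sinhc : Continuous sinhc := by
  refine continuous_iff_continuousAt.2 fun a => ?_
  rcases eq_or_ne a 0 with rfl | ha
  · exact continuousAt_dslope_same.2 Real.differentiable_sinh.differentiableAt
  · exact (continuousAt_dslope_of_ne ha).2 Real.continuous_sinh.continuousAt

/-- The value of `cos² y` forced by the breaking equation at `|x| = a`. -/
noncomputable def cosSq (a : ℝ) : ℝ := Real.cosh a * sinhc a - Real.sinh a ^ 2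

lemma mul_cosSq (a : ℝ) : a * cosSq a = Real.sinh a * (Real.cosh a - a * Real.sinh a) := by
  rw [cosSq]
  linear_combination Real.cosh a * mul_sinhc a

lemma cosSq_zero : cosSq 0 = 1 := by simp [cosSq, sinhc_zero]

lemma continuous_cosSq : Continuous cosSq :=
  (Real.continuous_cosh.mul continuous_sinhc).sub (Real.continuous_sinh.pow 2)

lemma sinh_lt_mul_cosh {a : ℝ} (ha : 0 < a) : Real.sinh a < a * Real.cosh a := by
  have hmono : StrictMonoOn (fun t : ℝ => t * Real.cosh t - Real.sinh t) (Set.Ici 0) := by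
    refine strictMonoOn_of_deriv_pos (convex_Ici 0) (by fun_prop) fun t ht => ?_
    rw [interior_Ici] at ht
    have hd : HasDerivAt (fun t : ℝ => t * Real.cosh t - Real.sinh t)
        (1 * Real.cosh t + t * Real.sinh t - Real.cosh t) t :=
      ((hasDerivAt_id t).mul (Real.hasDerivAt_cosh t)).sub (Real.hasDerivAt_sinh t)
    rw [hd.deriv]
    have := mul_pos ht (Real.sinh_pos_iff.2 ht)
    linarith
  have := hmono (Set.mem_Ici.2 le_rfl) (Set.mem_Ici.2 ha.le) ha
  simp at this
  exact this

lemma cosSq_lt_one {a : ℝ} (ha : 0 < a) : cosSq a < 1 := by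
  have h1 := sinh_lt_mul_cosh ha
  have h2 := mul_cosSq a
  have h3 := Real.cosh_sq a
  have h4 := Real.cosh_pos a
  have : a * cosSq a < a * 1 := by
    rw [h2]
    nlinarith
  exact lt_of_mul_lt_mul_left this ha.le

lemma cosSq_le_one {a : ℝ} (ha : 0 ≤ a) : cosSq a ≤ 1 := by
  rcases ha.eq_or_lt with rfl | h
  · exact cosSq_zero.le
  · exact (cosSq_lt_one h).le

/-- On the half-line `a ≥ 0`, `cosSq` is nonnegative exactly on an interval `[0, a₀]`, and it vanishes
at `a₀`, the positive root of `a sinh a = cosh a`. -/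
lemma exists_endpoint : ∃ a₀ : ℝ, 0 < a₀ ∧ cosSq a₀ = 0 ∧
    ∀ a, 0 ≤ a → (0 ≤ cosSq a ↔ a ≤ a₀) := by
  have hanti : StrictAntiOn (fun t : ℝ => Real.cosh t - t * Real.sinh t) (Set.Ici 0) := by
    refine strictAntiOn_of_deriv_neg (convex_Ici 0) (by fun_prop) fun t ht => ?_
    rw [interior_Ici] at ht
    have hd : HasDerivAt (fun t : ℝ => Real.cosh t - t * Real.sinh t)
        (Real.sinh t - (1 * Real.sinh t + t * Real.cosh t)) t :=
      (Real.hasDerivAt_cosh t).sub ((hasDerivAt_id t).mul (Real.hasDerivAt_sinh t))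
    rw [hd.deriv]
    have := mul_pos ht (Real.cosh_pos t)
    linarith
  have h2 : Real.cosh 2 - 2 * Real.sinh 2 ≤ 0 := by
    rw [Real.cosh_eq, Real.sinh_eq]
    have h3 := Real.add_one_le_exp (2 : ℝ)
    have h4 : Real.exp (-2) ≤ 1 := Real.exp_le_one_iff.2 (by norm_num)
    linarith
  have hcont : ContinuousOn (fun t : ℝ => Real.cosh t - t * Real.sinh t) (Set.Icc 0 2) := by
    fun_prop
  obtain ⟨a₀, ha₀, hz⟩ := intermediate_value_Icc' (by norm_num : (0 : ℝ) ≤ 2) hcont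
    (show (0 : ℝ) ∈ _ from ⟨h2, by simp⟩)
  have hz' : Real.cosh a₀ - a₀ * Real.sinh a₀ = 0 := hz
  have hpos : 0 < a₀ := by
    refine lt_of_le_of_ne ha₀.1 ?_
    rintro rfl
    simp at hz'
  refine ⟨a₀, hpos, ?_, fun a ha => ?_⟩
  · have h := mul_cosSq a₀
    rw [hz', mul_zero] at h
    exact (mul_eq_zero.1 h).resolve_left hpos.ne'
  · rcases ha.eq_or_lt with rfl | h
    · simp [cosSq_zero, hpos.le]
    · rw [← mul_nonneg_iff_of_pos_left h, mul_cosSq,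
        mul_nonneg_iff_of_pos_left (Real.sinh_pos_iff.2 h), ← hz']
      exact hanti.le_iff_ge (Set.mem_Ici.2 hpos.le) (Set.mem_Ici.2 ha)

/-- The point `2 / s` on the breaking curve with parameter `a`; the sign `ε = ± 1` selects one of the
two arcs. -/
noncomputable def zArc (ε a : ℝ) : ℂ :=
  ⟨ε * (Real.cosh a * √(cosSq a)), -(Real.sinh a * √(1 - cosSq a))⟩

/-- One arc of the breaking curve. -/
noncomputable def sArc (ε a : ℝ) : ℂ := 2 / zArc ε a

lemma zArc_zero (ε : ℝ) : zArc ε 0 = (ε : ℂ) := by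
  apply Complex.ext <;> simp [zArc, cosSq_zero]

lemma zArc_im_neg (ε : ℝ) {a : ℝ} (ha : 0 < a) : (zArc ε a).im < 0 := by
  have := mul_pos (Real.sinh_pos_iff.2 ha) (Real.sqrt_pos.2 (sub_pos.2 (cosSq_lt_one ha)))
  simpa [zArc] using this

lemma zArc_ne_zero {ε : ℝ} (hε : ε ≠ 0) {a : ℝ} (ha : 0 ≤ a) : zArc ε a ≠ 0 := by
  rcases ha.eq_or_lt with rfl | h
  · rw [zArc_zero]; exact_mod_cast hε
  · intro h0
    have := zArc_im_neg ε h
    simp [h0] at this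

lemma continuous_zArc (ε : ℝ) : Continuous (zArc ε) := by
  have h : zArc ε = fun a => ((ε * (Real.cosh a * √(cosSq a)) : ℝ) : ℂ) +
      ((-(Real.sinh a * √(1 - cosSq a)) : ℝ) : ℂ) * I := by
    funext a
    apply Complex.ext <;> simp [zArc, -Complex.ofReal_mul, -Complex.ofReal_neg]
  have hc := continuous_cosSq
  rw [h]
  fun_prop

lemma continuousOn_sArc {ε : ℝ} (hε : ε ≠ 0) (a₀ : ℝ) :
    ContinuousOn (sArc ε) (Set.Icc 0 a₀) :=
  continuousOn_const.div (continuous_zArc ε).continuousOn fun _ ha => zArc_ne_zero hε ha.1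

lemma two_div_im_neg_iff (s : ℂ) : (2 / s).im < 0 ↔ 0 < s.im := by
  rcases eq_or_ne s 0 with rfl | hs
  · simp
  · have hp : 0 < Complex.normSq s := Complex.normSq_pos.2 hs
    have : (2 / s).im = -(2 * s.im / Complex.normSq s) := by simp [Complex.div_im]
    rw [this, neg_lt_zero, div_pos_iff_of_pos_right hp]
    simp

/-- Breaking points in the upper half plane lie on the arcs. -/
lemma mem_arc_of_breaking {s : ℂ} (him : 0 < s.im) (hH : (Hfun s).re = 0) :
    ∃ a : ℝ, 0 ≤ a ∧ 0 ≤ cosSq a ∧ (s = sArc 1 a ∨ s = sArc (-1) a) := by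
  have hs : s ≠ 0 := by rintro rfl; simp at him
  obtain ⟨x, y, hre, hi, hiff⟩ := exists_uniformizer s hs
  have heq := hiff.1 hH
  have hneg := (two_div_im_neg_iff s).2 him
  have hx : x ≠ 0 := by
    rintro rfl
    rw [hi] at hneg
    simp at hneg
  have ha : 0 < |x| := abs_pos.2 hx
  have hS : Real.sinh |x| ^ 2 = Real.sinh x ^ 2 := by
    rcases abs_choice x with h | h <;> simp [h]
  have hG : cosSq |x| = Real.cos y ^ 2 := by
    have h1 : |x| * (Real.sinh |x| ^ 2 + Real.cos y ^ 2) = Real.sinh |x| * Real.cosh |x| := by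
      rcases abs_choice x with h | h
      · rw [h, heq]
      · rw [h, Real.sinh_neg, Real.cosh_neg]
        linear_combination -heq
    have h2 : |x| * cosSq |x| = |x| * Real.cos y ^ 2 := by
      rw [mul_cosSq]; linear_combination -h1
    exact mul_left_cancel₀ ha.ne' h2
  have hG1 : 1 - cosSq |x| = Real.sin y ^ 2 := by
    rw [hG]; linear_combination -Real.sin_sq_add_cos_sq y
  have him2 : (2 / s).im = -(Real.sinh |x| * √(1 - cosSq |x|)) := by
    rw [hG1, Real.sqrt_sq_eq_abs, ← Real.abs_sinh, ← abs_mul, ← hi, abs_of_neg hneg, neg_neg]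
  refine ⟨|x|, ha.le, hG ▸ sq_nonneg _, ?_⟩
  have key : 2 / s = zArc 1 |x| ∨ 2 / s = zArc (-1) |x| := by
    rcases abs_choice (Real.cos y) with h | h
    · left
      refine Complex.ext ?_ him2
      simp only [zArc]
      rw [hG, Real.sqrt_sq_eq_abs, Real.cosh_abs, h, hre, one_mul]
    · right
      refine Complex.ext ?_ him2
      simp only [zArc]
      rw [hG, Real.sqrt_sq_eq_abs, Real.cosh_abs, h, hre]
      ring
  rcases key with h | h
  · left; rw [sArc, ← h]; field_simp
  · right; rw [sArc, ← h]; field_simp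

/-- Points of the arcs with parameter `a > 0` are breaking points in the upper half plane. -/
lemma breaking_of_arc {ε : ℝ} (hε : ε ^ 2 = 1) {a : ℝ} (ha : 0 < a) (hG : 0 ≤ cosSq a) :
    0 < (sArc ε a).im ∧ (Hfun (sArc ε a)).re = 0 := by
  have hε0 : ε ≠ 0 := by rintro rfl; simp at hε
  have hz0 := zArc_ne_zero hε0 ha.le
  have hs0 : sArc ε a ≠ 0 := div_ne_zero two_ne_zero hz0
  have hzs : 2 / sArc ε a = zArc ε a := by rw [sArc]; field_simp
  refine ⟨by rw [← two_div_im_neg_iff, hzs]; exact zArc_im_neg ε ha, ?_⟩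
  obtain ⟨x, y, hre, hi, hiff⟩ := exists_uniformizer _ hs0
  rw [hiff]
  rw [hzs] at hre hi
  have hlt := cosSq_lt_one ha
  have e1 : (Real.cosh x * Real.cos y) ^ 2 = Real.cosh a ^ 2 * cosSq a := by
    rw [← hre]
    simp only [zArc]
    rw [mul_pow, hε, mul_pow, Real.sq_sqrt hG, one_mul]
  have e2 : (Real.sinh x * Real.sin y) ^ 2 = Real.sinh a ^ 2 * (1 - cosSq a) := by
    rw [← hi]
    simp only [zArc]
    rw [neg_sq, mul_pow, Real.sq_sqrt (by linarith)]
  rw [mul_pow, Real.cosh_sq, Real.cosh_sq] at e1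
  rw [mul_pow, Real.sin_sq] at e2
  -- The confocal ellipse through `zArc ε a` is unique: eliminate `cos² y` from `e1` and `e2`.
  have hprod : (Real.sinh a ^ 2 - Real.sinh x ^ 2) *
      (1 + Real.sinh x ^ 2 - cosSq a) = 0 := by
    linear_combination -Real.sinh x ^ 2 * e1 - (1 + Real.sinh x ^ 2) * e2
  have hX : Real.sinh a ^ 2 = Real.sinh x ^ 2 := by
    rcases mul_eq_zero.1 hprod with h | h
    · linarith
    · nlinarith [sq_nonneg (Real.sinh x)]
  have hc : Real.cos y ^ 2 = cosSq a := by
    linarith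
  have hm := mul_cosSq a
  rw [hc, ← hX]
  rcases sq_eq_sq_iff_eq_or_eq_neg.1 hX with h | h
  · rw [← Real.sinh_injective h]
    linear_combination hm
  · rw [← Real.sinh_neg] at h
    have hxa : x = -a := by rw [Real.sinh_injective h, neg_neg]
    rw [hxa, Real.sinh_neg, Real.cosh_neg]
    linear_combination -hm

theorem upper_breaking_curve_connects :
    IsCompact ({s : ℂ | 0 < s.im ∧ (Hfun s).re = 0} ∪ {(-2 : ℂ), (2 : ℂ)}) ∧
    IsConnected ({s : ℂ | 0 < s.im ∧ (Hfun s).re = 0} ∪ {(-2 : ℂ), (2 : ℂ)}) := by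
  obtain ⟨a₀, hpos, hzero, hiff⟩ := exists_endpoint
  have hset : {s : ℂ | 0 < s.im ∧ (Hfun s).re = 0} ∪ {(-2 : ℂ), (2 : ℂ)} =
      sArc 1 '' Set.Icc 0 a₀ ∪ sArc (-1) '' Set.Icc 0 a₀ := by
    have h1 : sArc 1 0 = 2 := by rw [sArc, zArc_zero]; simp
    have h2 : sArc (-1) 0 = -2 := by rw [sArc, zArc_zero]; norm_num
    have h0 : (0 : ℝ) ∈ Set.Icc 0 a₀ := ⟨le_rfl, hpos.le⟩
    apply Set.Subset.antisymm
    · rintro s (⟨him, hH⟩ | rfl | rfl)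
      · obtain ⟨a, ha, hG, h | h⟩ := mem_arc_of_breaking him hH
        · exact Or.inl ⟨a, ⟨ha, (hiff a ha).1 hG⟩, h.symm⟩
        · exact Or.inr ⟨a, ⟨ha, (hiff a ha).1 hG⟩, h.symm⟩
      · exact Or.inr ⟨0, h0, h2⟩
      · exact Or.inl ⟨0, h0, h1⟩
    · rintro s (⟨a, ha, rfl⟩ | ⟨a, ha, rfl⟩)
      · rcases ha.1.eq_or_lt with rfl | h
        · right; simp [h1]
        · exact Or.inl (breaking_of_arc (by norm_num) h ((hiff a ha.1).2 ha.2))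
      · rcases ha.1.eq_or_lt with rfl | h
        · right; simp [h2]
        · exact Or.inl (breaking_of_arc (by norm_num) h ((hiff a ha.1).2 ha.2))
  have hc1 := continuousOn_sArc one_ne_zero a₀
  have hc2 := continuousOn_sArc (neg_ne_zero.2 one_ne_zero) a₀
  have hend : sArc 1 a₀ = sArc (-1) a₀ := by simp [sArc, zArc, hzero]
  rw [hset]
  refine ⟨(isCompact_Icc.image_of_continuousOn hc1).union
    (isCompact_Icc.image_of_continuousOn hc2), ?_⟩
  have hmem : a₀ ∈ Set.Icc 0 a₀ := ⟨hpos.le, le_rfl⟩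
  exact IsConnected.union ⟨sArc 1 a₀, ⟨a₀, hmem, rfl⟩, ⟨a₀, hmem, hend.symm⟩⟩
    ((isConnected_Icc hpos.le).image _ hc1) ((isConnected_Icc hpos.le).image _ hc2)
end

section
/- The function g is strictly decreasing on (0, ∞); moreover g(t) → +∞ as t → 0⁺ and g(t) → −∞ as t → +∞. -/
theorem gfun_strictAnti_and_limits :
    StrictAntiOn gfun (Set.Ioi (0 : ℝ)) ∧
    Filter.Tendsto gfun (nhdsWithin 0 (Set.Ioi (0 : ℝ))) Filter.atTop ∧
    Filter.Tendsto gfun Filter.atTop Filter.atBot := by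
  refine ⟨?_, ?_, ?_⟩
  · intro s hs t ht hst
    have hs : 0 < s := hs
    have ht : 0 < t := ht
    unfold gfun
    have h1 : Real.sqrt (s ^ 2 + 4) < Real.sqrt (t ^ 2 + 4) :=
      Real.sqrt_lt_sqrt (by positivity) (by gcongr)
    -- Squared, this is `s² (t² + 4) ≤ t² (s² + 4)`.
    have h2 : s * Real.sqrt (t ^ 2 + 4) ≤ t * Real.sqrt (s ^ 2 + 4) := by
      refine (abs_le_of_sq_le_sq' ?_ ?_).2
      · rw [mul_pow, mul_pow, Real.sq_sqrt (by positivity), Real.sq_sqrt (by positivity)]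
        nlinarith
      · positivity
    have h3 : Real.log ((2 + Real.sqrt (t ^ 2 + 4)) / t)
        ≤ Real.log ((2 + Real.sqrt (s ^ 2 + 4)) / s) := by
      apply Real.log_le_log (by positivity)
      rw [div_le_div_iff₀ ht hs]
      nlinarith
    linarith
  · have hlim : Filter.Tendsto (fun t : ℝ => 2 * Real.log (4 * t⁻¹) + (-3))
        (nhdsWithin 0 (Set.Ioi (0 : ℝ))) Filter.atTop :=
      Filter.tendsto_atTop_add_const_right _ _
        ((Real.tendsto_log_atTop.comp
          (tendsto_inv_nhdsGT_zero.const_mul_atTop (by norm_num))).const_mul_atTop (by norm_num))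
    refine Filter.tendsto_atTop_mono' _ ?_ hlim
    filter_upwards [Ioo_mem_nhdsGT (zero_lt_one' ℝ)] with t ht
    obtain ⟨ht0, ht1⟩ := ht
    have h2 : 2 ≤ Real.sqrt (t ^ 2 + 4) := Real.le_sqrt_of_sq_le (by nlinarith)
    have h3 : Real.sqrt (t ^ 2 + 4) ≤ 3 := Real.sqrt_le_iff.mpr ⟨by norm_num, by nlinarith⟩
    have h4 : Real.log (4 * t⁻¹) ≤ Real.log ((2 + Real.sqrt (t ^ 2 + 4)) / t) := by
      apply Real.log_le_log (by positivity)
      rw [← div_eq_mul_inv]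
      gcongr
      linarith
    unfold gfun
    linarith
  · have hlim : Filter.Tendsto (fun t : ℝ => 2 * Real.log 3 + -t) Filter.atTop Filter.atBot :=
      Filter.tendsto_atBot_add_const_left _ _ Filter.tendsto_neg_atTop_atBot
    refine Filter.tendsto_atBot_mono' _ ?_ hlim
    filter_upwards [Filter.eventually_ge_atTop (2 : ℝ)] with t ht
    have h2 : t ≤ Real.sqrt (t ^ 2 + 4) := Real.le_sqrt_of_sq_le (by linarith)
    have h3 : Real.sqrt (t ^ 2 + 4) ≤ t + 2 :=
      Real.sqrt_le_iff.mpr ⟨by linarith, by nlinarith⟩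
    have h4 : Real.log ((2 + Real.sqrt (t ^ 2 + 4)) / t) ≤ Real.log 3 := by
      apply Real.log_le_log (by positivity)
      rw [div_le_iff₀ (by linarith)]
      linarith
    unfold gfun
    linarith
end

section
/- There exists a unique t > 0 with g(t) = 0, and this unique positive solution t_c satisfies 1.32 < t_c < 1.33 (numerically t_c ≈ 1.32549). -/
lemma gfun_strictAntiOn : StrictAntiOn gfun (Set.Ioi 0) := by
  intro s hs t ht hst
  simp only [Set.mem_Ioi] at hs ht
  have hsqrt : √(s ^ 2 + 4) < √(t ^ 2 + 4) := Real.sqrt_lt_sqrt (by positivity) (by gcongr)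
  -- `√(t² + 4) / t` is decreasing: after clearing denominators, compare squares.
  have hcross : s * √(t ^ 2 + 4) ≤ t * √(s ^ 2 + 4) := by
    refine (pow_le_pow_iff_left₀ (by positivity) (by positivity) two_ne_zero).mp ?_
    rw [mul_pow, mul_pow, Real.sq_sqrt (by positivity), Real.sq_sqrt (by positivity)]
    nlinarith
  have hratio : (2 + √(t ^ 2 + 4)) / t < (2 + √(s ^ 2 + 4)) / s := by
    rw [div_lt_div_iff₀ ht hs]
    nlinarith
  have hlog := Real.log_lt_log (by positivity) hratio
  unfold gfun
  linarith

lemma gfun_continuousOn : ContinuousOn gfun (Set.Ioi 0) := by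
  unfold gfun
  refine ContinuousOn.sub (continuousOn_const.mul (ContinuousOn.log ?_ ?_)) (by fun_prop)
  · exact ContinuousOn.div (by fun_prop) continuousOn_id fun x hx => ne_of_gt hx
  · intro x hx
    have : 0 < x := hx
    positivity

lemma log_ten_thirds : Real.log (10 / 3) = Real.log 2 + Real.log 5 - Real.log 3 := by
  rw [Real.log_div (by norm_num) (by norm_num), Real.log_ten_eq]

lemma gfun_left_pos : 0 < gfun 1.32 := by
  have hlo : 2.396 < √((1.32 : ℝ) ^ 2 + 4) := Real.lt_sqrt_of_sq_lt (by norm_num)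
  have hhi : √((1.32 : ℝ) ^ 2 + 4) < 2.397 := by
    rw [Real.sqrt_lt' (by norm_num)]; norm_num
  have hratio : (3.33 : ℝ) ≤ (2 + √((1.32 : ℝ) ^ 2 + 4)) / 1.32 := by
    rw [le_div_iff₀ (by norm_num)]; linarith
  have hlog := Real.log_le_log (by norm_num) hratio
  have hsplit : Real.log 3.33 = Real.log (10 / 3) + Real.log 0.999 := by
    rw [← Real.log_mul (by norm_num) (by norm_num)]; norm_num
  have hcorr := Real.one_sub_inv_le_log_of_pos (show (0 : ℝ) < 0.999 by norm_num)
  rw [log_ten_thirds] at hsplit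
  have h2 := Real.log_two_gt_d9
  have h3 := Real.log_three_lt_d9
  have h5 := Real.log_five_gt_d9
  unfold gfun
  norm_num at *
  linarith

lemma gfun_right_neg : gfun 1.33 < 0 := by
  have hlo : 2.401 < √((1.33 : ℝ) ^ 2 + 4) := Real.lt_sqrt_of_sq_lt (by norm_num)
  have hhi : √((1.33 : ℝ) ^ 2 + 4) < 2.402 := by
    rw [Real.sqrt_lt' (by norm_num)]; norm_num
  have hratio : (2 + √((1.33 : ℝ) ^ 2 + 4)) / 1.33 ≤ 3.31 := by
    rw [div_le_iff₀ (by norm_num)]; linarith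
  have hlog := Real.log_le_log (by positivity) hratio
  have hsplit : Real.log 3.31 = Real.log (10 / 3) + Real.log 0.993 := by
    rw [← Real.log_mul (by norm_num) (by norm_num)]; norm_num
  have hcorr := Real.log_le_sub_one_of_pos (show (0 : ℝ) < 0.993 by norm_num)
  rw [log_ten_thirds] at hsplit
  have h2 := Real.log_two_lt_d9
  have h3 := Real.log_three_gt_d9
  have h5 := Real.log_five_lt_d9
  unfold gfun
  norm_num at *
  linarith

theorem critical_time_exists_unique_and_bounds :
    (∃! t : ℝ, 0 < t ∧ gfun t = 0) ∧
    ∀ t : ℝ, 0 < t → gfun t = 0 → 1.32 < t ∧ t < 1.33 := by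
  have hleft : (1.32 : ℝ) ∈ Set.Ioi (0 : ℝ) := by norm_num
  have hright : (1.33 : ℝ) ∈ Set.Ioi (0 : ℝ) := by norm_num
  constructor
  · have hsub : Set.Icc (1.32 : ℝ) 1.33 ⊆ Set.Ioi 0 := fun x hx => lt_of_lt_of_le hleft hx.1
    obtain ⟨t, ht, hgt⟩ := intermediate_value_Icc' (by norm_num) (gfun_continuousOn.mono hsub)
      ⟨gfun_right_neg.le, gfun_left_pos.le⟩
    refine ⟨t, ⟨hsub ht, hgt⟩, ?_⟩
    rintro s ⟨hs, hgs⟩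
    exact gfun_strictAntiOn.injOn hs (hsub ht) (hgs.trans hgt.symm)
  · intro t ht hgt
    constructor
    · exact (gfun_strictAntiOn.lt_iff_gt ht hleft).mp (hgt ▸ gfun_left_pos)
    · exact (gfun_strictAntiOn.lt_iff_gt hright ht).mp (hgt ▸ gfun_right_neg)
end

section
/- (Derivative of H at regular breaking points.) For every s ∈ ℂ with Re s ≠ 0 and Im s ≠ 0, the function H is complex-differentiable at s with HasDerivAt H (−(4/s² − 1)^(1/2)) s, and this derivative is nonzero. In particular, at every breaking point off the real and imaginary axes, d/ds h(2/s; s) ≠ 0. -/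
/-!
Write `z = 2 / s`, `w = z ^ 2 - 1` and `r = w ^ (1/2)`. Off the two axes `s ^ 2` is not real, so
`w` is not real either; hence `w` avoids the branch cut of the square root and `r ≠ 0`. Moreover
`(z + r) * (z - r) = 1`, so if `z + r` were real then `z - r`, and with it `z`, would be real,
which is impossible off the real axis; hence `z + r` avoids the branch cut of the logarithm.
The chain rule therefore applies, and `r * r' = w' / 2 = -4 / s ^ 3` collapses the result to `-r`.
-/

open Complex

lemma four_div_sq_sub_one_im_ne_zero {s : ℂ} (hre : s.re ≠ 0) (him : s.im ≠ 0) :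
    (4 / s ^ 2 - 1).im ≠ 0 := by
  intro h
  have hs : s ≠ 0 := fun h0 => hre (by simp [h0])
  have hw : (((4 / s ^ 2 - 1).re : ℝ) : ℂ) = 4 / s ^ 2 - 1 := Complex.ext (by simp) (by simp [h])
  set a : ℝ := (4 / s ^ 2 - 1).re
  have h4 : ((a : ℂ) + 1) * s ^ 2 = 4 := by
    rw [hw]
    field_simp
    ring
  have hi := congrArg Complex.im h4
  have hr := congrArg Complex.re h4
  simp [pow_two] at hi hr
  have ha : a + 1 = 0 := by
    rcases hi with hi | hi
    · exact hi
    · exact absurd (by linarith : s.re * s.im = 0) (mul_ne_zero hre him)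
  rw [ha] at hr
  norm_num at hr

/-- If `r` is a square root of `(2 / s) ^ 2 - 1`, then `2 / s ± r` are mutually inverse, so
`2 / s + r` can be real only when `2 / s` is. -/
lemma two_div_add_im_ne_zero {s r : ℂ} (him : s.im ≠ 0) (hr : r ^ 2 = 4 / s ^ 2 - 1) :
    (2 / s + r).im ≠ 0 := by
  intro h
  have hs : s ≠ 0 := fun h0 => him (by simp [h0])
  have hprod : (2 / s + r) * (2 / s - r) = 1 := by
    linear_combination (-1 : ℂ) * hr
  have hinv : 2 / s - r = (2 / s + r)⁻¹ := eq_inv_of_mul_eq_one_right hprod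
  have him' : (2 / s - r).im = 0 := by rw [hinv, Complex.inv_im, h]; simp
  have hz : (2 / s).im = 0 := by
    rw [Complex.add_im] at h
    rw [Complex.sub_im] at him'
    linarith
  rw [div_eq_mul_inv, Complex.mul_im, Complex.inv_im] at hz
  simp [him, hs] at hz

theorem hasDerivAt_H_at_regular_points :
    ∀ s : ℂ, s.re ≠ 0 → s.im ≠ 0 →
      HasDerivAt Hfun (-((4 / s ^ 2 - 1) ^ ((1 : ℂ) / 2))) s ∧
      -((4 / s ^ 2 - 1) ^ ((1 : ℂ) / 2)) ≠ 0 := by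
  intro s hre him
  have hs : s ≠ 0 := fun h0 => hre (by simp [h0])
  have hwim := four_div_sq_sub_one_im_ne_zero hre him
  have hw : HasDerivAt (fun s : ℂ => 4 / s ^ 2 - 1) (-8 / s ^ 3) s := by
    have h := ((hasDerivAt_const s (4 : ℂ)).div (hasDerivAt_pow 2 s) (pow_ne_zero 2 hs)).sub_const 1
    refine h.congr_deriv ?_
    field_simp
    norm_num
    ring
  have hr := hw.cpow_const (c := (1 : ℂ) / 2) (Or.inr hwim)
  have hsq : ((4 / s ^ 2 - 1) ^ ((1 : ℂ) / 2)) ^ 2 = 4 / s ^ 2 - 1 := by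
    rw [← Complex.cpow_nat_mul]
    norm_num
  have hw0 : 4 / s ^ 2 - 1 ≠ 0 := fun h0 => hwim (by rw [h0]; simp)
  have hr0 : (4 / s ^ 2 - 1) ^ ((1 : ℂ) / 2) ≠ 0 := fun h0 => hw0 (by rw [← hsq, h0]; simp)
  have hzim := two_div_add_im_ne_zero him hsq
  -- The derivative of the square root, written through the root itself.
  have hr' : HasDerivAt (fun s : ℂ => (4 / s ^ 2 - 1) ^ ((1 : ℂ) / 2))
      (-4 / (s ^ 3 * (4 / s ^ 2 - 1) ^ ((1 : ℂ) / 2))) s := by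
    refine hr.congr_deriv ?_
    rw [Complex.cpow_sub _ _ hw0, Complex.cpow_one]
    generalize (4 / s ^ 2 - 1) ^ ((1 : ℂ) / 2) = r at hsq hr0
    rw [← hsq]
    field_simp
    norm_num
  have hz : HasDerivAt (fun s : ℂ => 2 / s) (-2 / s ^ 2) s := by
    refine ((hasDerivAt_const s (2 : ℂ)).div (hasDerivAt_id s) hs).congr_deriv ?_
    simp
  have hlog := (hz.add hr').clog (Or.inr hzim)
  have hH := (hlog.const_mul 2).sub ((hasDerivAt_id s).mul hr')
  refine ⟨hH.congr_deriv ?_, neg_ne_zero.mpr hr0⟩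
  have hz0 : 2 / s + (4 / s ^ 2 - 1) ^ ((1 : ℂ) / 2) ≠ 0 := fun h0 => hzim (by rw [h0]; simp)
  simp only [id, Pi.add_apply]
  generalize (4 / s ^ 2 - 1) ^ ((1 : ℂ) / 2) = r at hr0 hz0
  have hz1 : 2 + s * r ≠ 0 := by
    intro h0
    apply hz0
    field_simp
    simpa using h0
  field_simp
  ring
end

section
/- (The explicit genus-zero h-function has derivative h'(z;s) = (2 − s z)/(z² − 1)^(1/2).) For every z ∈ ℂ with (Im z ≠ 0 or Re z > 1), one has HasDerivAt h ((2 − s·z)/w(z)) z. -/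
/-!
Write `a = (z - 1)^(1/2)` and `b = (z + 1)^(1/2)`, so that `w = a b` and `w' = z / w`. Formally
`(log (z + w))' = (1 + z / w) / (z + w) = 1 / w`, which gives `h' = (2 - s z) / w`. The point to
check is that `z + w` avoids the cut `(-∞, 0]` of the logarithm: `2 (z + w) = (a + b)²`, where `a`
and `b` are principal square roots of points off the cut and so have positive real part
(`re_cpow_half_pos`), and the square of a number with positive real part lies in the slit plane
(`sq_mem_slitPlane`).
-/

open Complex

/-- `w(z) = (z − 1)^(1/2) · (z + 1)^(1/2)`, the branch of `(z² − 1)^(1/2)`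
analytic off `[−1, 1]` with `w(z)/z → 1` at infinity. -/
noncomputable def wfun (z : ℂ) : ℂ := (z - 1) ^ ((1 : ℂ) / 2) * (z + 1) ^ ((1 : ℂ) / 2)

/-- The genus-zero modified external field `h(z; s) = 2 log(z + w(z)) − s·w(z)`. -/
noncomputable def hfun (s z : ℂ) : ℂ := 2 * Complex.log (z + wfun z) - s * wfun z

/-- The principal square root maps the slit plane into the open right half-plane. -/
lemma re_cpow_half_pos {u : ℂ} (hu : u ∈ slitPlane) : 0 < (u ^ ((1 : ℂ) / 2)).re := by
  rw [cpow_def_of_ne_zero (slitPlane_ne_zero hu), exp_re]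
  have him : (log u * ((1 : ℂ) / 2)).im = u.arg / 2 := by
    rw [show log u * ((1 : ℂ) / 2) = log u / (2 : ℝ) by push_cast; ring, div_ofReal_im, log_im]
  rw [him]
  have h1 := neg_pi_lt_arg u
  have h2 := lt_of_le_of_ne (arg_le_pi u) (mem_slitPlane_iff_arg.mp hu).1
  exact mul_pos (Real.exp_pos _)
    (Real.cos_pos_of_mem_Ioo ⟨by linarith, by linarith⟩)

lemma cpow_half_sq (u : ℂ) : (u ^ ((1 : ℂ) / 2)) ^ 2 = u := by
  have h := cpow_nat_inv_pow u (n := 2) two_ne_zero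
  rw [one_div]
  exact_mod_cast h

lemma hasDerivAt_cpow_half {u : ℂ} (hu : u ∈ slitPlane) :
    HasDerivAt (fun x : ℂ => x ^ ((1 : ℂ) / 2)) (1 / (2 * u ^ ((1 : ℂ) / 2))) u := by
  have h := (hasDerivAt_id u).cpow_const (c := (1 : ℂ) / 2) hu
  refine h.congr_deriv ?_
  have h0 := slitPlane_ne_zero hu
  have hr : u ^ ((1 : ℂ) / 2) ≠ 0 := fun h => by
    have := re_cpow_half_pos hu
    rw [h, zero_re] at this
    exact lt_irrefl _ this
  simp only [id]
  rw [cpow_sub _ _ h0, cpow_one]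
  field_simp
  simp

/-- Squaring maps the open right half-plane into the slit plane. -/
lemma sq_mem_slitPlane {p : ℂ} (hp : 0 < p.re) : p ^ 2 ∈ slitPlane := by
  rw [mem_slitPlane_iff, pow_two, mul_re, mul_im]
  by_cases h : p.im = 0
  · left
    rw [h]
    nlinarith
  · right
    intro h'
    have : p.re * p.im = 0 := by linarith
    rcases mul_eq_zero.mp this with h1 | h1
    · exact hp.ne' h1
    · exact h h1

theorem hasDerivAt_hfun (s : ℂ) (z : ℂ) (hz : z.im ≠ 0 ∨ 1 < z.re) :
    HasDerivAt (hfun s) ((2 - s * z) / wfun z) z := by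
  have hm : z - 1 ∈ slitPlane := by
    rw [mem_slitPlane_iff]
    rcases hz with h | h
    · right; simpa using h
    · left; simpa using h
  have hp : z + 1 ∈ slitPlane := by
    rw [mem_slitPlane_iff]
    rcases hz with h | h
    · right; simpa using h
    · left; simp only [add_re, one_re]; linarith
  have hda := (hasDerivAt_cpow_half hm).comp z ((hasDerivAt_id z).sub_const 1)
  have hdb := (hasDerivAt_cpow_half hp).comp z ((hasDerivAt_id z).add_const 1)
  have hwdef : wfun z = (z - 1) ^ ((1 : ℂ) / 2) * (z + 1) ^ ((1 : ℂ) / 2) := rfl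
  have hdw : HasDerivAt wfun _ z := hda.mul hdb
  have ha := re_cpow_half_pos hm
  have hb := re_cpow_half_pos hp
  have ha2 := cpow_half_sq (z - 1)
  have hb2 := cpow_half_sq (z + 1)
  simp only [Function.comp, id] at hdw
  generalize (z - 1) ^ ((1 : ℂ) / 2) = a at *
  generalize (z + 1) ^ ((1 : ℂ) / 2) = b at *
  have ha0 : a ≠ 0 := fun h => by simp [h] at ha
  have hb0 : b ≠ 0 := fun h => by simp [h] at hb
  have hw0 : wfun z ≠ 0 := hwdef ▸ mul_ne_zero ha0 hb0
  replace hdw : HasDerivAt wfun (z / wfun z) z := by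
    refine hdw.congr_deriv ?_
    rw [hwdef]
    field_simp
    linear_combination ha2 + hb2
  -- `(a + b)² = 2 (z + w)`, so `z + w = ((a + b) / √2)²` is the square of a number with `Re > 0`.
  have hslit : z + wfun z ∈ slitPlane := by
    have hs : ((a + b) * ((√2)⁻¹ : ℝ)) ^ 2 = z + wfun z := by
      have h2 : (((√2)⁻¹ : ℝ) : ℂ) ^ 2 = 1 / 2 := by
        rw [← ofReal_pow, inv_pow, Real.sq_sqrt zero_le_two]
        norm_num
      rw [mul_pow, h2, hwdef]
      linear_combination (ha2 + hb2) / 2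
    rw [← hs]
    apply sq_mem_slitPlane
    rw [re_mul_ofReal, add_re]
    positivity
  have hne := slitPlane_ne_zero hslit
  have hlog := ((hasDerivAt_id z).add hdw).clog hslit
  refine ((hlog.const_mul 2).sub (hdw.const_mul s)).congr_deriv ?_
  simp only [Pi.add_apply, id]
  field_simp
  ring
end

section
/- (Jump of h on the main arc.) For every real x with −1 < x < 1, the boundary values of h satisfy h₊(x) + h₋(x) = 0; precisely, the function ε ↦ h(x + i·ε) + h(x − i·ε) tends to 0 as ε → 0⁺. -/
/-!
As `ε → 0⁺`, the points `x ± iε - 1` approach the cut of the logarithm from its two sides, so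
`(x ± iε - 1)^(1/2)` tends to `exp ((log |x - 1| ± iπ) / 2)`, and these two values are opposite.
Hence `w(x ± iε) → ±A` for a single `A : ℂ`, and `A ^ 2 = x ^ 2 - 1` (`exists_wfun_limits`).
Since `x ^ 2 - 1 < 0`, `A` is not real, so `x ± A` lie off the cut of `log`; and since
`(x + A) * (x - A) = 1`, `log (x - A) = -log (x + A)`. The `w` terms of `h` cancel as well.
-/

open Complex

open Filter Topology

lemma wfun_eq_exp {z : ℂ} (h : z - 1 ≠ 0) :
    wfun z = Complex.exp (Complex.log (z - 1) * (1 / 2)) * (z + 1) ^ ((1 : ℂ) / 2) := by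
  rw [wfun, Complex.cpow_def_of_ne_zero h]

/-- The two boundary values of `w` at `x ∈ (-1, 1)` are opposite square roots of `x ^ 2 - 1`.
Which of the two roots is the upper boundary value plays no role for `h₊ + h₋`. -/
lemma exists_wfun_limits (x : ℝ) (hx1 : -1 < x) (hx2 : x < 1) :
    ∃ A : ℂ, A ^ 2 = (x : ℂ) ^ 2 - 1 ∧
      Tendsto (fun ε : ℝ => wfun ((x : ℂ) + Complex.I * (ε : ℂ))) (𝓝[>] 0) (𝓝 A) ∧
      Tendsto (fun ε : ℝ => wfun ((x : ℂ) - Complex.I * (ε : ℂ))) (𝓝[>] 0) (𝓝 (-A)) := by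
  set L : ℂ := (Real.log ‖(x : ℂ) - 1‖ : ℂ) with hL
  have hre : ((x : ℂ) - 1).re < 0 := by simpa using hx2
  have him : ((x : ℂ) - 1).im = 0 := by simp
  have hslit : (x : ℂ) + 1 ∈ Complex.slitPlane := by
    left; simp; linarith
  have hplus : Tendsto (fun ε : ℝ => (x : ℂ) + Complex.I * (ε : ℂ)) (𝓝[>] 0) (𝓝 (x : ℂ)) := by
    have : Continuous (fun ε : ℝ => (x : ℂ) + Complex.I * (ε : ℂ)) := by fun_prop
    simpa using (this.tendsto 0).mono_left nhdsWithin_le_nhds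
  have hminus : Tendsto (fun ε : ℝ => (x : ℂ) - Complex.I * (ε : ℂ)) (𝓝[>] 0) (𝓝 (x : ℂ)) := by
    have : Continuous (fun ε : ℝ => (x : ℂ) - Complex.I * (ε : ℂ)) := by fun_prop
    simpa using (this.tendsto 0).mono_left nhdsWithin_le_nhds
  have hsqrt : ContinuousAt (fun z : ℂ => (z + 1) ^ ((1 : ℂ) / 2)) (x : ℂ) :=
    (continuousAt_id.add continuousAt_const).cpow continuousAt_const hslit
  have hlogp : Tendsto (fun ε : ℝ => Complex.log ((x : ℂ) + Complex.I * (ε : ℂ) - 1)) (𝓝[>] 0)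
      (𝓝 (L + Real.pi * Complex.I)) := by
    refine (Complex.tendsto_log_nhdsWithin_im_nonneg_of_re_neg_of_im_zero hre him).comp
      (tendsto_nhdsWithin_iff.2 ⟨hplus.sub_const 1, ?_⟩)
    filter_upwards [self_mem_nhdsWithin] with ε hε
    simpa using le_of_lt hε
  have hlogm : Tendsto (fun ε : ℝ => Complex.log ((x : ℂ) - Complex.I * (ε : ℂ) - 1)) (𝓝[>] 0)
      (𝓝 (L - Real.pi * Complex.I)) := by
    refine (Complex.tendsto_log_nhdsWithin_im_neg_of_re_neg_of_im_zero hre him).comp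
      (tendsto_nhdsWithin_iff.2 ⟨hminus.sub_const 1, ?_⟩)
    filter_upwards [self_mem_nhdsWithin] with ε hε
    simpa using hε
  have hexp : Complex.exp ((L - Real.pi * Complex.I) * (1 / 2))
      = -Complex.exp ((L + Real.pi * Complex.I) * (1 / 2)) := by
    rw [show (L + Real.pi * Complex.I) * (1 / 2)
      = (L - Real.pi * Complex.I) * (1 / 2) + Real.pi * Complex.I by ring,
      Complex.exp_add, Complex.exp_pi_mul_I]
    ring
  refine ⟨Complex.exp ((L + Real.pi * Complex.I) * (1 / 2)) * ((x : ℂ) + 1) ^ ((1 : ℂ) / 2),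
    ?_, ?_, ?_⟩
  · have h1 : (((x : ℂ) + 1) ^ ((1 : ℂ) / 2)) ^ 2 = (x : ℂ) + 1 := by
      simp
    have h2 : Complex.exp L = 1 - x := by
      have hn : ‖(x : ℂ) - 1‖ = 1 - x := by
        rw [← Complex.ofReal_one, ← Complex.ofReal_sub, Complex.norm_real, Real.norm_eq_abs,
          abs_of_neg (by linarith)]
        ring
      rw [hL, hn, ← Complex.ofReal_exp, Real.exp_log (by linarith)]
      push_cast; rfl
    rw [mul_pow, h1, ← Complex.exp_nat_mul,
      show ((2 : ℕ) : ℂ) * ((L + Real.pi * Complex.I) * (1 / 2)) = L + Real.pi * Complex.I by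
        push_cast; ring,
      Complex.exp_add, Complex.exp_pi_mul_I, h2]
    ring
  · refine Tendsto.congr' ?_ (((hlogp.mul_const (1 / 2)).cexp).mul (hsqrt.tendsto.comp hplus))
    filter_upwards with ε
    refine (wfun_eq_exp fun h => ?_).symm
    have := congrArg Complex.re h
    simp at this
    linarith
  · rw [← neg_mul, ← hexp]
    refine Tendsto.congr' ?_ (((hlogm.mul_const (1 / 2)).cexp).mul (hsqrt.tendsto.comp hminus))
    filter_upwards with ε
    refine (wfun_eq_exp fun h => ?_).symm
    have := congrArg Complex.re h
    simp at this
    linarith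

/-- A square root of the negative number `x ^ 2 - 1` is not real, hence `x + A` avoids the cut. -/
lemma add_mem_slitPlane_of_sq {x : ℝ} (hx1 : -1 < x) (hx2 : x < 1) {A : ℂ}
    (hA : A ^ 2 = (x : ℂ) ^ 2 - 1) : (x : ℂ) + A ∈ Complex.slitPlane := by
  right
  intro h
  have him : A.im = 0 := by simpa using h
  have hre := congrArg Complex.re hA
  simp [pow_two, him] at hre
  nlinarith [mul_self_nonneg A.re]

theorem hfun_jump_on_main_arc (s : ℂ) (x : ℝ) (hx1 : -1 < x) (hx2 : x < 1) :
    Filter.Tendsto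
      (fun ε : ℝ => hfun s ((x : ℂ) + Complex.I * (ε : ℂ)) + hfun s ((x : ℂ) - Complex.I * (ε : ℂ)))
      (nhdsWithin 0 (Set.Ioi (0 : ℝ)))
      (nhds 0) := by
  obtain ⟨A, hA, hp, hm⟩ := exists_wfun_limits x hx1 hx2
  have hsp := add_mem_slitPlane_of_sq hx1 hx2 hA
  have hsm := add_mem_slitPlane_of_sq hx1 hx2 (A := -A) (by rw [neg_sq, hA])
  have hinv : (x : ℂ) + -A = ((x : ℂ) + A)⁻¹ := by
    refine eq_inv_of_mul_eq_one_left ?_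
    linear_combination -hA
  have hlog : Complex.log ((x : ℂ) + -A) = -Complex.log ((x : ℂ) + A) := by
    rw [hinv, Complex.log_inv _ (Complex.slitPlane_arg_ne_pi hsp)]
  have hplus : Tendsto (fun ε : ℝ => (x : ℂ) + Complex.I * (ε : ℂ)) (𝓝[>] 0) (𝓝 (x : ℂ)) := by
    have : Continuous (fun ε : ℝ => (x : ℂ) + Complex.I * (ε : ℂ)) := by fun_prop
    simpa using (this.tendsto 0).mono_left nhdsWithin_le_nhds
  have hminus : Tendsto (fun ε : ℝ => (x : ℂ) - Complex.I * (ε : ℂ)) (𝓝[>] 0) (𝓝 (x : ℂ)) := by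
    have : Continuous (fun ε : ℝ => (x : ℂ) - Complex.I * (ε : ℂ)) := by fun_prop
    simpa using (this.tendsto 0).mono_left nhdsWithin_le_nhds
  have hlim := ((((hplus.add hp).clog hsp).const_mul 2).sub (hp.const_mul s)).add
    ((((hminus.add hm).clog hsm).const_mul 2).sub (hm.const_mul s))
  rw [hlog, show 2 * Complex.log ((x : ℂ) + A) - s * A
    + (2 * -Complex.log ((x : ℂ) + A) - s * -A) = 0 by ring] at hlim
  exact hlim
end

section
/- (Cube-root-power vanishing at the critical breaking point s = 2: h(2/s;s) = (2/3)·(2−s)^{3/2}·(1 + o(1)).) The function s ↦ (2·Real.arccosh(2/s) − Real.sqrt(4 − s²)) / (2 − s)^{3/2} tends to 2/3 as s → 2 from the left (i.e. along s ∈ (0,2)). -/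
/-- The contributions `-4 / (s √(4 - s²))` of the `arccosh` term and `s / √(4 - s²)` of the square
root combine to `-√(4 - s²) / s`. -/
lemma hasDerivAt_saddle_value {s : ℝ} (hs : s ∈ Set.Ioo (0 : ℝ) 2) :
    HasDerivAt (fun s : ℝ => 2 * Real.arccosh (2 / s) - Real.sqrt (4 - s ^ 2))
      (-(Real.sqrt (4 - s ^ 2) / s)) s := by
  obtain ⟨h0, h2⟩ := hs
  have hpos : 0 < 4 - s ^ 2 := by nlinarith
  have hdiv : HasDerivAt (fun s : ℝ => 2 / s) (-2 / s ^ 2) s := by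
    refine ((hasDerivAt_const s (2 : ℝ)).fun_div (hasDerivAt_id' s) h0.ne').congr_deriv ?_
    simp
  -- `Real.arccosh` is definitionally Mathlib's `Real.arcosh`.
  have harc : HasDerivAt Real.arccosh (Real.sqrt ((2 / s) ^ 2 - 1))⁻¹ (2 / s) :=
    Real.hasDerivAt_arcosh (show (1 : ℝ) < 2 / s by rwa [lt_div_iff₀ h0, one_mul])
  have hsqrt : HasDerivAt (fun s : ℝ => Real.sqrt (4 - s ^ 2))
      (-(2 * s) / (2 * Real.sqrt (4 - s ^ 2))) s := by
    have h : HasDerivAt (fun s : ℝ => 4 - s ^ 2) (-(2 * s)) s := by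
      simpa using (hasDerivAt_pow 2 s).const_sub 4
    exact h.sqrt hpos.ne'
  refine (((harc.comp s hdiv).const_mul 2).sub hsqrt).congr_deriv ?_
  have hrw : Real.sqrt ((2 / s) ^ 2 - 1) = Real.sqrt (4 - s ^ 2) / s := by
    rw [show (2 / s) ^ 2 - 1 = (4 - s ^ 2) / s ^ 2 by field_simp; norm_num,
      Real.sqrt_div hpos.le, Real.sqrt_sq h0.le]
  have hr : 0 < Real.sqrt (4 - s ^ 2) := Real.sqrt_pos.2 hpos
  have hr2 : Real.sqrt (4 - s ^ 2) ^ 2 = 4 - s ^ 2 := Real.sq_sqrt hpos.le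
  rw [hrw]
  field_simp
  rw [hr2]
  ring

theorem saddle_value_cube_root_power_vanishing :
    Filter.Tendsto
      (fun s : ℝ => (2 * Real.arccosh (2 / s) - Real.sqrt (4 - s ^ 2)) / (2 - s) ^ ((3 : ℝ) / 2))
      (nhdsWithin 2 (Set.Ioo (0 : ℝ) 2))
      (nhds (2 / 3)) := by
  have h02 : (0 : ℝ) < 2 := two_pos
  rw [nhdsWithin_Ioo_eq_nhdsLT h02]
  refine HasDerivAt.lhopital_zero_left_on_Ioo
    (f' := fun s => -(Real.sqrt (4 - s ^ 2) / s))
    (g' := fun s => -((3 / 2) * Real.sqrt (2 - s))) h02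
    (fun s hs => hasDerivAt_saddle_value hs) ?_ ?_ ?_ ?_ ?_
  · intro s hs
    have h : HasDerivAt (fun s : ℝ => 2 - s) (-1) s := by
      simpa using (hasDerivAt_id s).const_sub 2
    refine (h.rpow_const (p := 3 / 2) (Or.inl (sub_pos.2 hs.2).ne')).congr_deriv ?_
    rw [Real.sqrt_eq_rpow]
    norm_num
  · intro s hs
    have := Real.sqrt_pos.2 (sub_pos.2 hs.2)
    exact neg_ne_zero.2 (by positivity)
  · have hc : ContinuousAt
        (fun s : ℝ => 2 * Real.arccosh (2 / s) - Real.sqrt (4 - s ^ 2)) 2 := by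
      unfold Real.arccosh
      refine ContinuousAt.sub (continuousAt_const.mul (ContinuousAt.log ?_ ?_)) (by fun_prop)
      · have hd : ContinuousAt (fun s : ℝ => 2 / s) 2 :=
          continuousAt_const.div continuousAt_id two_ne_zero
        exact hd.add ((hd.pow 2).sub continuousAt_const).sqrt
      · norm_num
    have h := hc.tendsto
    norm_num [Real.arccosh] at h
    exact (by simpa [Real.arccosh] using h : Filter.Tendsto _ _ _).mono_left nhdsWithin_le_nhds
  · have hc : ContinuousAt (fun s : ℝ => (2 - s) ^ ((3 : ℝ) / 2)) 2 :=
      (continuousAt_const.sub continuousAt_id).rpow_const (Or.inr (by norm_num))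
    have h := hc.tendsto
    rw [sub_self, Real.zero_rpow (by norm_num)] at h
    exact h.mono_left nhdsWithin_le_nhds
  · have hc : ContinuousAt (fun s : ℝ => 2 / 3 * (Real.sqrt (2 + s) / s)) 2 :=
      continuousAt_const.mul (ContinuousAt.div (by fun_prop) continuousAt_id two_ne_zero)
    have h4 : Real.sqrt (2 + 2) = 2 := by
      rw [show (2 : ℝ) + 2 = 2 ^ 2 by norm_num, Real.sqrt_sq h02.le]
    have h := hc.tendsto.mono_left (nhdsWithin_le_nhds (s := Set.Iio 2))
    rw [h4, div_self two_ne_zero, mul_one] at h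
    refine h.congr' ?_
    filter_upwards [Ioo_mem_nhdsLT h02] with s hs
    have hs0 := hs.1
    have hr := Real.sqrt_pos.2 (sub_pos.2 hs.2)
    rw [show 4 - s ^ 2 = (2 - s) * (2 + s) by ring, Real.sqrt_mul (sub_pos.2 hs.2).le]
    field_simp
end

section
/- (Positivity of Re h between the hard edge and the saddle point on the real axis.) For every real s with 0 < s < 2 and every real x with 1 < x ≤ 2/s, one has 2·Real.arccosh(x) − s·Real.sqrt(x² − 1) > 0; i.e. the genus-zero modified external field h(x;s) = 2 log(x + √(x²−1)) − s·√(x²−1) is strictly positive on (1, 2/s]. -/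
theorem sinh_lt_self_mul_cosh {t : ℝ} (ht : 0 < t) : Real.sinh t < t * Real.cosh t := by
  obtain ⟨c, ⟨hc0, hct⟩, hc⟩ := exists_hasDerivAt_eq_slope Real.sinh Real.cosh ht
    Real.continuous_sinh.continuousOn (fun y _ => Real.hasDerivAt_sinh y)
  have hlt : Real.cosh c < Real.cosh t := by
    rw [Real.cosh_lt_cosh, abs_of_pos hc0, abs_of_pos ht]
    exact hct
  rw [hc, Real.sinh_zero, sub_zero, sub_zero, div_lt_iff₀ ht] at hlt
  linarith

theorem h_positive_between_hard_edge_and_saddle :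
    ∀ s x : ℝ, 0 < s → s < 2 → 1 < x → x ≤ 2 / s →
      0 < 2 * Real.arccosh x - s * Real.sqrt (x ^ 2 - 1) := by
  intro s x hs _ hx hxs
  -- `Real.arccosh` unfolds to the same logarithm as Mathlib's `Real.arcosh`.
  change 0 < 2 * Real.arcosh x - s * Real.sqrt (x ^ 2 - 1)
  have ht := Real.arcosh_pos hx
  have key := sinh_lt_self_mul_cosh ht
  rw [Real.sinh_arcosh hx.le, Real.cosh_arcosh hx.le] at key
  rw [le_div_iff₀ hs] at hxs
  have h1 := mul_lt_mul_of_pos_left key hs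
  have h2 := mul_le_mul_of_nonneg_left hxs ht.le
  linarith
end
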